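/- arXiv:1710.01108 — 2 statements merged into one kernel-verified Lean document; each statement's English description precedes it below -/
import Mathlib

section
/- Let f, g : I → ℝ be continuous and strictly monotone, and suppose g is strictly increasing. Then A^[f] ≤ A^[g] if and only if g ∘ f⁻¹ is convex on f(I). Likewise, if g is strictly decreasing, then A^[f] ≤ A^[g] if and only if g ∘ f⁻¹ is concave on f(I). -/
/-!
Put `φ = g ∘ f⁻¹`. For increasing `g`, applying `g` to `A^[f](a) ≤ A^[g](a)` and writing
`bᵢ = f(aᵢ)` turns it into the equal-weight Jensen inequality
`φ((b₁ + ⋯ + bₙ)/n) ≤ (φ(b₁) + ⋯ + φ(bₙ))/n`, which convexity of `φ` implies. Conversely, the case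
`n = 2` is midpoint convexity, which implies convexity because `φ` is continuous: along a segment,
the parameters at which the chord lies above `φ` form a closed set stable under midpoints, and such
a set has no gaps. Since `A^[-g] = A^[g]`, the case of decreasing `g` reduces to that of `-g`.
-/

open Set Function Filter

/-- The quasi-arithmetic mean generated by `f` on the interval `I`,
applied to a vector `a ∈ Iⁿ`: `f⁻¹((f a₁ + ⋯ + f aₙ)/n)`, where the
inverse of `f` is taken on `I`. -/
noncomputable def qam (I : Set ℝ) (f : ℝ → ℝ) {n : ℕ} (a : Fin n → ℝ) : ℝ :=
  Function.invFunOn f I ((∑ i, f (a i)) / n)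

/-- The natural (pointwise) partial order on quasi-arithmetic means:
`A^[f] ≤ A^[g]` iff `A^[f](a) ≤ A^[g](a)` for every `n ≥ 1` and every `a ∈ Iⁿ`. -/
def qamLE (I : Set ℝ) (f g : ℝ → ℝ) : Prop :=
  ∀ n : ℕ, 1 ≤ n → ∀ a : Fin n → ℝ, (∀ i, a i ∈ I) → qam I f a ≤ qam I g a

/-- `A^[f] = A^[g]` : equality of the two quasi-arithmetic means as means. -/
def qamEQ (I : Set ℝ) (f g : ℝ → ℝ) : Prop :=
  ∀ n : ℕ, 1 ≤ n → ∀ a : Fin n → ℝ, (∀ i, a i ∈ I) → qam I f a = qam I g a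

/-- `f` is strictly monotone on `I` (strictly increasing or strictly decreasing). -/
def StrictMonoOrAntiOn (f : ℝ → ℝ) (I : Set ℝ) : Prop :=
  StrictMonoOn f I ∨ StrictAntiOn f I

section MidpointConvexity

lemma ordConnected_of_isClosed_of_midpoint_mem {s : Set ℝ} (hs : IsClosed s)
    (hmid : ∀ x ∈ s, ∀ y ∈ s, midpoint ℝ x y ∈ s) : s.OrdConnected := by
  refine ⟨fun x hx y hy z hz => by_contra fun hzs => ?_⟩
  -- `(a, b)` is the component of `z` in the complement of `s`; its midpoint lies in `s`.
  set a := sSup (s ∩ Iic z)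
  set b := sInf (s ∩ Ici z)
  have hbdd : BddAbove (s ∩ Iic z) := bddAbove_Iic.mono inter_subset_right
  have hbdd' : BddBelow (s ∩ Ici z) := bddBelow_Ici.mono inter_subset_right
  obtain ⟨has, haz⟩ : a ∈ s ∩ Iic z := (hs.inter isClosed_Iic).csSup_mem ⟨x, hx, hz.1⟩ hbdd
  obtain ⟨hbs, hzb⟩ : b ∈ s ∩ Ici z := (hs.inter isClosed_Ici).csInf_mem ⟨y, hy, hz.2⟩ hbdd'
  have hab : a < b := (lt_of_le_of_ne haz (ne_of_mem_of_not_mem has hzs)).trans_le hzb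
  have hm := hmid a has b hbs
  rcases le_total (midpoint ℝ a b) z with hmz | hzm
  · exact hab.not_ge (midpoint_le_left.1 (le_csSup hbdd ⟨hm, hmz⟩))
  · exact hab.not_ge (right_le_midpoint.1 (csInf_le hbdd' ⟨hm, hzm⟩))

variable {E β : Type*} [AddCommGroup E] [Module ℝ E] [TopologicalSpace E]
  [IsTopologicalAddGroup E] [ContinuousSMul ℝ E]
  [AddCommGroup β] [PartialOrder β] [IsOrderedAddMonoid β] [Module ℝ β] [PosSMulMono ℝ β]
  [TopologicalSpace β] [IsTopologicalAddGroup β] [ContinuousSMul ℝ β] [OrderClosedTopology β]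

lemma convexOn_of_continuousOn_of_map_midpoint_le {s : Set E} {φ : E → β} (hs : Convex ℝ s)
    (hφ : ContinuousOn φ s)
    (hmid : ∀ x ∈ s, ∀ y ∈ s, φ (midpoint ℝ x y) ≤ midpoint ℝ (φ x) (φ y)) :
    ConvexOn ℝ s φ := by
  refine ⟨hs, fun x hx y hy a b ha hb hab => ?_⟩
  let T : Set ℝ :=
    {t ∈ Icc 0 1 | φ (AffineMap.lineMap x y t) ≤ AffineMap.lineMap (φ x) (φ y) t}
  have hline : MapsTo (AffineMap.lineMap x y : ℝ → E) (Icc 0 1) s :=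
    fun t ht => hs.lineMap_mem hx hy ht
  have hT : IsClosed T := isClosed_Icc.isClosed_le
    (hφ.comp AffineMap.lineMap_continuous.continuousOn hline)
    AffineMap.lineMap_continuous.continuousOn
  have hTmid : ∀ t ∈ T, ∀ u ∈ T, midpoint ℝ t u ∈ T := by
    rintro t ⟨ht, htφ⟩ u ⟨hu, huφ⟩
    refine ⟨(convex_Icc 0 1).midpoint_mem ht hu, ?_⟩
    rw [AffineMap.map_midpoint, AffineMap.map_midpoint]
    refine (hmid _ (hline ht) _ (hline hu)).trans ?_
    rw [midpoint_eq_smul_add, midpoint_eq_smul_add]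
    exact smul_le_smul_of_nonneg_left (add_le_add htφ huφ) (by simp)
  have h0 : (0 : ℝ) ∈ T := by simp [T]
  have h1 : (1 : ℝ) ∈ T := by simp [T]
  have hbT : b ∈ T :=
    (ordConnected_of_isClosed_of_midpoint_mem hT hTmid).out h0 h1 ⟨hb, by linarith⟩
  obtain rfl : a = 1 - b := by linarith
  simpa only [AffineMap.lineMap_apply_module] using hbT.2

end MidpointConvexity

section InvFunOn

lemma invFunOn_comp_of_injective {α β γ : Type*} [Nonempty α] {h : β → γ} (hh : Injective h)
    (f : α → β) (s : Set α) (y : β) : invFunOn (h ∘ f) s (h y) = invFunOn f s y := by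
  unfold invFunOn
  congr! <;> simp only [comp_apply, hh.eq_iff]

variable {α β : Type*} [LinearOrder α] [TopologicalSpace α] [OrderTopology α] [Nonempty α]
  [LinearOrder β] [TopologicalSpace β] [OrderTopology β] {s : Set α} {f : α → β}

lemma continuousOn_invFunOn_of_strictMonoOn (hs : s.OrdConnected) (hfs : (f '' s).OrdConnected)
    (hf : StrictMonoOn f s) : ContinuousOn (invFunOn f s) (f '' s) := by
  have hinv : (f '' s).domRestrict (invFunOn f s) = Subtype.val ∘ (hf.orderIso f s).symm := by
    funext y
    obtain ⟨x, rfl⟩ := (hf.orderIso f s).surjective y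
    rw [comp_apply, OrderIso.symm_apply_apply]
    exact hf.injOn.leftInvOn_invFunOn x.2
  rw [continuousOn_iff_continuous_domRestrict, hinv]
  exact continuous_subtype_val.comp (hf.orderIso f s).symm.continuous

lemma continuousOn_invFunOn_of_strictAntiOn (hs : s.OrdConnected) (hfs : (f '' s).OrdConnected)
    (hf : StrictAntiOn f s) : ContinuousOn (invFunOn f s) (f '' s) :=
  continuousOn_invFunOn_of_strictMonoOn (β := βᵒᵈ) hs hfs.dual hf.dual_right

end InvFunOn

section EqualWeights

variable {𝕜 : Type*} [Field 𝕜] {n : ℕ}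

lemma centerMass_one_eq_sum_div (b : Fin n → 𝕜) :
    Finset.univ.centerMass (1 : Fin n → 𝕜) b = (∑ i, b i) / n := by
  simp [Finset.centerMass, div_eq_inv_mul]

variable [LinearOrder 𝕜] [IsStrictOrderedRing 𝕜] {s : Set 𝕜} {b : Fin n → 𝕜}

lemma sum_div_mem_of_convex (hs : Convex 𝕜 s) (hn : 0 < n) (hb : ∀ i, b i ∈ s) :
    (∑ i, b i) / n ∈ s := by
  rw [← centerMass_one_eq_sum_div]
  exact hs.centerMass_mem (fun _ _ => zero_le_one) (by simpa using hn) fun i _ => hb i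

lemma map_sum_div_le_of_convexOn {φ : 𝕜 → 𝕜} (hφ : ConvexOn 𝕜 s φ) (hn : 0 < n)
    (hb : ∀ i, b i ∈ s) : φ ((∑ i, b i) / n) ≤ (∑ i, φ (b i)) / n := by
  rw [← centerMass_one_eq_sum_div, ← centerMass_one_eq_sum_div]
  exact hφ.map_centerMass_le (fun _ _ => zero_le_one) (by simpa using hn) fun i _ => hb i

end EqualWeights

lemma convex_image_of_isPreconnected {α : Type*} [TopologicalSpace α] {s : Set α} {f : α → ℝ}
    (hs : IsPreconnected s) (hf : ContinuousOn f s) : Convex ℝ (f '' s) :=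
  (hs.image f hf).ordConnected.convex

section QuasiArithmeticMean

variable {I : Set ℝ} {f g : ℝ → ℝ} {n : ℕ} {a : Fin n → ℝ}

lemma StrictMonoOrAntiOn.injOn (hf : StrictMonoOrAntiOn f I) : InjOn f I :=
  hf.elim StrictMonoOn.injOn StrictAntiOn.injOn

lemma StrictMonoOrAntiOn.continuousOn_invFunOn (hf : StrictMonoOrAntiOn f I)
    (hI : I.OrdConnected) (hfI : (f '' I).OrdConnected) :
    ContinuousOn (invFunOn f I) (f '' I) :=
  hf.elim (continuousOn_invFunOn_of_strictMonoOn hI hfI)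
    (continuousOn_invFunOn_of_strictAntiOn hI hfI)

lemma sum_div_mem_image (hfI : Convex ℝ (f '' I)) (hn : 0 < n) (ha : ∀ i, a i ∈ I) :
    (∑ i, f (a i)) / n ∈ f '' I :=
  sum_div_mem_of_convex hfI hn fun i => mem_image_of_mem f (ha i)

lemma qam_mem (hfI : Convex ℝ (f '' I)) (hn : 0 < n) (ha : ∀ i, a i ∈ I) : qam I f a ∈ I :=
  invFunOn_mem (sum_div_mem_image hfI hn ha)

lemma apply_qam (hfI : Convex ℝ (f '' I)) (hn : 0 < n) (ha : ∀ i, a i ∈ I) :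
    f (qam I f a) = (∑ i, f (a i)) / n :=
  invFunOn_eq (sum_div_mem_image hfI hn ha)

lemma qam_le_qam_iff (hfI : Convex ℝ (f '' I)) (hgI : Convex ℝ (g '' I)) (hg : StrictMonoOn g I)
    (hn : 0 < n) (ha : ∀ i, a i ∈ I) :
    qam I f a ≤ qam I g a ↔
      (g ∘ invFunOn f I) ((∑ i, f (a i)) / n) ≤ (∑ i, g (a i)) / n := by
  rw [← hg.le_iff_le (qam_mem hfI hn ha) (qam_mem hgI hn ha), apply_qam hgI hn ha]
  rfl

lemma qamLE_of_convexOn (hf : InjOn f I) (hgI : Convex ℝ (g '' I)) (hg : StrictMonoOn g I)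
    (hφ : ConvexOn ℝ (f '' I) (g ∘ invFunOn f I)) : qamLE I f g := by
  intro n hn a ha
  have jensen := map_sum_div_le_of_convexOn hφ hn fun i => mem_image_of_mem f (ha i)
  rw [qam_le_qam_iff hφ.1 hgI hg hn ha]
  simpa only [comp_apply, hf.leftInvOn_invFunOn (ha _)] using jensen

lemma convexOn_of_qam_pair_le (hf : InjOn f I) (hfI : Convex ℝ (f '' I))
    (hgI : Convex ℝ (g '' I)) (hg : StrictMonoOn g I)
    (hφ : ContinuousOn (g ∘ invFunOn f I) (f '' I))
    (hle : ∀ x ∈ I, ∀ y ∈ I, qam I f ![x, y] ≤ qam I g ![x, y]) :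
    ConvexOn ℝ (f '' I) (g ∘ invFunOn f I) := by
  refine convexOn_of_continuousOn_of_map_midpoint_le hfI hφ ?_
  rintro _ ⟨x, hx, rfl⟩ _ ⟨y, hy, rfl⟩
  have hxy : ∀ i, ![x, y] i ∈ I := Fin.forall_fin_two.2 ⟨hx, hy⟩
  have hmean := (qam_le_qam_iff hfI hgI hg two_pos hxy).1 (hle x hx y hy)
  simpa [midpoint_eq_smul_add, inv_mul_eq_div, hf.leftInvOn_invFunOn hx,
    hf.leftInvOn_invFunOn hy] using hmean

theorem qamLE_iff_convexOn (hI : I.OrdConnected) (hfc : ContinuousOn f I)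
    (hgc : ContinuousOn g I) (hf : StrictMonoOrAntiOn f I) (hg : StrictMonoOn g I) :
    qamLE I f g ↔ ConvexOn ℝ (f '' I) (g ∘ invFunOn f I) := by
  have hfI := convex_image_of_isPreconnected hI.isPreconnected hfc
  have hgI := convex_image_of_isPreconnected hI.isPreconnected hgc
  have hφ : ContinuousOn (g ∘ invFunOn f I) (f '' I) :=
    hgc.comp (hf.continuousOn_invFunOn hI hfI.ordConnected) (surjOn_image f I).mapsTo_invFunOn
  refine ⟨fun hle => ?_, qamLE_of_convexOn hf.injOn hgI hg⟩
  exact convexOn_of_qam_pair_le hf.injOn hfI hgI hg hφ fun x hx y hy =>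
    hle 2 one_le_two ![x, y] (Fin.forall_fin_two.2 ⟨hx, hy⟩)

lemma qam_neg (I : Set ℝ) (f : ℝ → ℝ) (a : Fin n → ℝ) : qam I (-f) a = qam I f a := by
  have hmean : (∑ i, (-f) (a i)) / n = -((∑ i, f (a i)) / n) := by
    simp only [Pi.neg_apply, Finset.sum_neg_distrib, neg_div]
  rw [qam, qam, hmean]
  exact invFunOn_comp_of_injective neg_injective f I _

end QuasiArithmeticMean

/-- For continuous strictly monotone `f g : I → ℝ`, if `g` is strictly
increasing then `A^[f] ≤ A^[g] ↔ g ∘ f⁻¹` is convex on `f(I)`; if `g` is strictly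
decreasing then `A^[f] ≤ A^[g] ↔ g ∘ f⁻¹` is concave on `f(I)`. -/
theorem comparison_iff_convexity_of_g_comp_finv
    (I : Set ℝ) (hI : I.OrdConnected) (hInontriv : ∃ x ∈ I, ∃ y ∈ I, x < y)
    (f g : ℝ → ℝ) (hfc : ContinuousOn f I) (hgc : ContinuousOn g I)
    (hfm : StrictMonoOrAntiOn f I) :
    (StrictMonoOn g I →
      (qamLE I f g ↔ ConvexOn ℝ (f '' I) (g ∘ Function.invFunOn f I))) ∧
    (StrictAntiOn g I →
      (qamLE I f g ↔ ConcaveOn ℝ (f '' I) (g ∘ Function.invFunOn f I))) := by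
  refine ⟨qamLE_iff_convexOn hI hfc hgc hfm, fun hg => ?_⟩
  calc qamLE I f g
    _ ↔ qamLE I f (-g) := by simp only [qamLE, qam_neg]
    _ ↔ ConvexOn ℝ (f '' I) (-(g ∘ invFunOn f I)) :=
      qamLE_iff_convexOn hI hfc hgc.neg hfm hg.neg
    _ ↔ ConcaveOn ℝ (f '' I) (g ∘ invFunOn f I) := neg_convexOn_iff
end

section
/- Let f, g : I → ℝ be continuous and strictly monotone. The following are equivalent: (a) A^[f] ≤ A^[g]; (b) there exists ξ ∈ (0,1) such that A^[f]_ξ(a₁,a₂) ≤ A^[g]_ξ(a₁,a₂) for all a₁, a₂ ∈ I; (c) for every ξ ∈ (0,1) and all a₁, a₂ ∈ I, A^[f]_ξ(a₁,a₂) ≤ A^[g]_ξ(a₁,a₂). -/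
/-!
Negating a generator does not change its mean, so `f` and `g` may be taken strictly increasing.
Comparison of the means with weights `w` then says that `φ = g ∘ f⁻¹` satisfies Jensen's inequality
with weights `w` on the interval `f(I)`. For a continuous `φ`, the inequality for a single pair of
weights `(ξ, 1 - ξ)` already forces convexity: if the difference between `φ` and a chord had an
interior maximum exceeding its boundary values, the first point where it is attained would be the
`ξ`-weighted mean of a point strictly to its left, where the difference is smaller, and a point to
its right. Convexity in turn gives Jensen's inequality for all weights. Conversely, the unweighted
mean of two numbers is the case `ξ = 1/2`.
-/

open Set Function Filter

/-- The weighted two-variable quasi-arithmetic mean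
`A^[f]_ξ(a₁,a₂) = f⁻¹(ξ f(a₁) + (1-ξ) f(a₂))`, with `f⁻¹` taken on `I`. -/
noncomputable def qamW (I : Set ℝ) (f : ℝ → ℝ) (ξ a₁ a₂ : ℝ) : ℝ :=
  Function.invFunOn f I (ξ * f a₁ + (1 - ξ) * f a₂)

lemma exists_first_isMaxOn {α β : Type*} [LinearOrder α] [TopologicalSpace α]
    [OrderClosedTopology α] [LinearOrder β] [TopologicalSpace β] [ClosedIciTopology β]
    {s : Set α} {ψ : α → β} (hs : IsCompact s) (hne : s.Nonempty) (hψ : ContinuousOn ψ s) :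
    ∃ c ∈ s, IsMaxOn ψ s c ∧ ∀ x ∈ s, x < c → ψ x < ψ c := by
  obtain ⟨m, hm, hmax⟩ := hs.exists_isMaxOn hne hψ
  have hcompact : IsCompact (s ∩ ψ ⁻¹' Ici (ψ m)) :=
    hs.of_isClosed_subset (hψ.preimage_isClosed_of_isClosed hs.isClosed isClosed_Ici)
      inter_subset_left
  obtain ⟨c, ⟨hc, hmc⟩, hleast⟩ := hcompact.exists_isLeast ⟨m, hm, self_mem_Ici⟩
  refine ⟨c, hc, fun x hx => le_trans (hmax hx) hmc, fun x hx hxc => ?_⟩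
  by_contra! hcx
  exact (hleast ⟨hx, le_trans hmc hcx⟩).not_gt hxc

lemma exists_mem_Ico_mem_Ioc_weighted_mean_eq {𝕜 : Type*} [Field 𝕜] [LinearOrder 𝕜]
    [IsStrictOrderedRing 𝕜] {a b c ξ : 𝕜} (hc : c ∈ Ioo a b) (hξ : ξ ∈ Ioo (0 : 𝕜) 1) :
    ∃ u ∈ Ico a c, ∃ v ∈ Ioc c b, ξ * u + (1 - ξ) * v = c := by
  obtain ⟨ε, hε, hεmin⟩ : ∃ ε, 0 < ε ∧ ε ≤ min (c - a) (b - c) :=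
    ⟨_, lt_min (sub_pos.2 hc.1) (sub_pos.2 hc.2), le_rfl⟩
  obtain ⟨hεa, hεb⟩ := le_min_iff.1 hεmin
  have hleft : 0 < (1 - ξ) * ε := mul_pos (sub_pos.2 hξ.2) hε
  have hright : 0 < ξ * ε := mul_pos hξ.1 hε
  exact ⟨c - (1 - ξ) * ε, ⟨by linarith, by linarith⟩, c + ξ * ε, ⟨by linarith, by linarith⟩,
    by ring⟩

lemma le_max_of_forall_weight_le {ψ : ℝ → ℝ} {a b t ξ : ℝ} (hψ : ContinuousOn ψ (Icc a b))
    (hξ : ξ ∈ Ioo (0 : ℝ) 1)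
    (hle : ∀ x ∈ Icc a b, ∀ y ∈ Icc a b, ψ (ξ * x + (1 - ξ) * y) ≤ ξ * ψ x + (1 - ξ) * ψ y)
    (ht : t ∈ Icc a b) : ψ t ≤ max (ψ a) (ψ b) := by
  by_contra! hlt
  obtain ⟨c, hc, hmax, hfirst⟩ := exists_first_isMaxOn isCompact_Icc ⟨t, ht⟩ hψ
  have hlt_max : max (ψ a) (ψ b) < ψ c := hlt.trans_le (hmax ht)
  have hac : a ≠ c := by rintro rfl; exact (le_max_left _ _).not_gt hlt_max
  have hcb : c ≠ b := by rintro rfl; exact (le_max_right _ _).not_gt hlt_max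
  obtain ⟨u, hu, v, hv, huv⟩ :=
    exists_mem_Ico_mem_Ioc_weighted_mean_eq ⟨hc.1.lt_of_ne hac, hc.2.lt_of_ne hcb⟩ hξ
  have huI : u ∈ Icc a b := ⟨hu.1, hu.2.le.trans hc.2⟩
  have hvI : v ∈ Icc a b := ⟨hc.1.trans hv.1.le, hv.2⟩
  refine lt_irrefl (ψ c) ?_
  calc
    ψ c ≤ ξ * ψ u + (1 - ξ) * ψ v := huv ▸ hle u huI v hvI
    _ < ξ * ψ c + (1 - ξ) * ψ c :=
      add_lt_add_of_lt_of_le (mul_lt_mul_of_pos_left (hfirst u huI hu.2) hξ.1)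
        (mul_le_mul_of_nonneg_left (hmax hvI) (sub_nonneg.2 hξ.2.le))
    _ = ψ c := by ring

lemma convexOn_of_forall_weight_le {E : Type*} [AddCommGroup E] [Module ℝ E] [TopologicalSpace E]
    [IsTopologicalAddGroup E] [ContinuousSMul ℝ E] {s : Set E} {φ : E → ℝ} {ξ : ℝ}
    (hs : Convex ℝ s) (hφ : ContinuousOn φ s) (hξ : ξ ∈ Ioo (0 : ℝ) 1)
    (hle : ∀ x ∈ s, ∀ y ∈ s, φ (ξ • x + (1 - ξ) • y) ≤ ξ * φ x + (1 - ξ) * φ y) :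
    ConvexOn ℝ s φ := by
  refine ⟨hs, fun x hx y hy p q hp hq hpq => ?_⟩
  let line : ℝ →ᵃ[ℝ] E := AffineMap.lineMap x y
  let chord : ℝ →ᵃ[ℝ] ℝ := AffineMap.lineMap (φ x) (φ y)
  have hline : MapsTo line (Icc 0 1) s := fun r hr => hs.lineMap_mem hx hy hr
  have hcont : ContinuousOn (fun r => φ (line r) - chord r) (Icc 0 1) :=
    (hφ.comp AffineMap.lineMap_continuous.continuousOn hline).sub
      AffineMap.lineMap_continuous.continuousOn
  have hweight : ∀ r ∈ Icc (0 : ℝ) 1, ∀ t ∈ Icc (0 : ℝ) 1,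
      φ (line (ξ * r + (1 - ξ) * t)) - chord (ξ * r + (1 - ξ) * t) ≤
        ξ * (φ (line r) - chord r) + (1 - ξ) * (φ (line t) - chord t) := by
    intro r hr t ht
    have hξξ : ξ + (1 - ξ) = 1 := by ring
    have hline_combo : line (ξ * r + (1 - ξ) * t) = ξ • line r + (1 - ξ) • line t :=
      Convex.combo_affine_apply hξξ
    have hchord_combo : chord (ξ * r + (1 - ξ) * t) = ξ * chord r + (1 - ξ) * chord t :=
      Convex.combo_affine_apply hξξ
    rw [hline_combo, hchord_combo]
    linarith [hle _ (hline hr) _ (hline ht)]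
  have hmax := le_max_of_forall_weight_le hcont hξ hweight (t := q) ⟨hq, by linarith⟩
  obtain rfl : p = 1 - q := by linarith
  simpa [line, chord, AffineMap.lineMap_apply_module, sub_nonpos] using hmax

lemma convex_image_of_ordConnected {I : Set ℝ} {f : ℝ → ℝ} (hI : I.OrdConnected)
    (hf : ContinuousOn f I) : Convex ℝ (f '' I) :=
  (hI.isPreconnected.image f hf).ordConnected.convex

lemma continuousOn_invFunOn_image {α β : Type*} [LinearOrder α] [TopologicalSpace α]
    [OrderTopology α] [Nonempty α] [LinearOrder β] [TopologicalSpace β] [OrderTopology β]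
    {s : Set α} {f : α → β} (hs : s.OrdConnected) (hfs : (f '' s).OrdConnected)
    (hf : StrictMonoOn f s) : ContinuousOn (invFunOn f s) (f '' s) := by
  let e : s ≃o f '' s := hf.orderIso f s
  have hrestrict : (f '' s).domRestrict (invFunOn f s) = Subtype.val ∘ e.symm := by
    funext y
    obtain ⟨x, rfl⟩ := e.surjective y
    rw [comp_apply, e.symm_apply_apply]
    exact hf.injOn.leftInvOn_invFunOn x.2
  rw [continuousOn_iff_continuous_domRestrict, hrestrict]
  exact continuous_subtype_val.comp e.symm.continuous

/-- The quasi-arithmetic mean `f⁻¹(∑ wᵢ f(aᵢ))` with weights `w`, where the inverse of `f` is taken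
on `I`. It has both `qam` and `qamW` as special cases. -/
noncomputable def weightedQam {ι : Type*} [Fintype ι] (I : Set ℝ) (f : ℝ → ℝ) (w a : ι → ℝ) : ℝ :=
  invFunOn f I (∑ i, w i * f (a i))

lemma qam_eq_weightedQam (I : Set ℝ) (f : ℝ → ℝ) {n : ℕ} (a : Fin n → ℝ) :
    qam I f a = weightedQam I f (fun _ => (n : ℝ)⁻¹) a := by
  rw [qam, weightedQam, ← Finset.mul_sum, div_eq_inv_mul]

lemma qamW_eq_weightedQam (I : Set ℝ) (f : ℝ → ℝ) (ξ a₁ a₂ : ℝ) :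
    qamW I f ξ a₁ a₂ = weightedQam I f ![ξ, 1 - ξ] ![a₁, a₂] := by
  simp [qamW, weightedQam]

lemma qamW_half_eq_qam (I : Set ℝ) (f : ℝ → ℝ) (a₁ a₂ : ℝ) :
    qamW I f (1 / 2) a₁ a₂ = qam I f ![a₁, a₂] := by
  rw [qamW, qam]
  congr 1
  simp only [Fin.sum_univ_two, Matrix.cons_val_zero, Matrix.cons_val_one]
  push_cast
  ring

lemma const_inv_mem_stdSimplex {n : ℕ} (hn : n ≠ 0) :
    (fun _ => (n : ℝ)⁻¹) ∈ stdSimplex ℝ (Fin n) :=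
  ⟨fun _ => by positivity, by simp [hn]⟩

lemma pair_mem_stdSimplex {ξ : ℝ} (hξ : ξ ∈ Icc (0 : ℝ) 1) :
    ![ξ, 1 - ξ] ∈ stdSimplex ℝ (Fin 2) :=
  ⟨Fin.forall_fin_two.2 ⟨hξ.1, sub_nonneg.2 hξ.2⟩, by simp⟩

-- This holds off the range of `f` as well, where both sides take the same default value.
lemma invFunOn_neg_neg {α β : Type*} [Nonempty α] [InvolutiveNeg β] (f : α → β) (s : Set α)
    (y : β) : invFunOn (-f) s (-y) = invFunOn f s y := by
  have hfiber : (fun x => x ∈ s ∧ (-f) x = -y) = fun x => x ∈ s ∧ f x = y := by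
    simp only [Pi.neg_apply, neg_inj]
  unfold invFunOn
  congr! 3

section WeightedQam

variable {ι : Type*} [Fintype ι] {I : Set ℝ} {f g : ℝ → ℝ} {w a : ι → ℝ}

lemma weightedQam_neg : weightedQam I (-f) w a = weightedQam I f w a := by
  simp only [weightedQam, ← invFunOn_neg_neg f, Pi.neg_apply, mul_neg, Finset.sum_neg_distrib]

lemma sum_mul_mem_image (hfI : Convex ℝ (f '' I)) (hw : w ∈ stdSimplex ℝ ι) (ha : ∀ i, a i ∈ I) :
    ∑ i, w i * f (a i) ∈ f '' I :=
  hfI.sum_mem (fun i _ => hw.1 i) hw.2 fun i _ => mem_image_of_mem f (ha i)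

lemma weightedQam_mem (hfI : Convex ℝ (f '' I)) (hw : w ∈ stdSimplex ℝ ι) (ha : ∀ i, a i ∈ I) :
    weightedQam I f w a ∈ I :=
  invFunOn_mem (sum_mul_mem_image hfI hw ha)

lemma apply_weightedQam (hfI : Convex ℝ (f '' I)) (hw : w ∈ stdSimplex ℝ ι) (ha : ∀ i, a i ∈ I) :
    f (weightedQam I f w a) = ∑ i, w i * f (a i) :=
  invFunOn_eq (sum_mul_mem_image hfI hw ha)

lemma weightedQam_le_of_convexOn (hgI : Convex ℝ (g '' I)) (hf : InjOn f I)
    (hg : StrictMonoOn g I) (hconv : ConvexOn ℝ (f '' I) (g ∘ invFunOn f I))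
    (hw : w ∈ stdSimplex ℝ ι) (ha : ∀ i, a i ∈ I) :
    weightedQam I f w a ≤ weightedQam I g w a := by
  refine (hg.le_iff_le (weightedQam_mem hconv.1 hw ha) (weightedQam_mem hgI hw ha)).1 ?_
  calc
    g (weightedQam I f w a) ≤ ∑ i, w i * (g ∘ invFunOn f I) (f (a i)) :=
      hconv.map_sum_le (fun i _ => hw.1 i) hw.2 fun i _ => mem_image_of_mem f (ha i)
    _ = ∑ i, w i * g (a i) := by simp only [comp_apply, hf.leftInvOn_invFunOn (ha _)]
    _ = g (weightedQam I g w a) := (apply_weightedQam hgI hw ha).symm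

end WeightedQam

section Comparison

variable {I : Set ℝ} {f g : ℝ → ℝ} {ξ : ℝ}

lemma convexOn_comp_invFunOn_of_qamW_le (hI : I.OrdConnected) (hfc : ContinuousOn f I)
    (hgc : ContinuousOn g I) (hf : StrictMonoOn f I) (hg : StrictMonoOn g I)
    (hξ : ξ ∈ Ioo (0 : ℝ) 1)
    (hle : ∀ a₁ ∈ I, ∀ a₂ ∈ I, qamW I f ξ a₁ a₂ ≤ qamW I g ξ a₁ a₂) :
    ConvexOn ℝ (f '' I) (g ∘ invFunOn f I) := by
  have hfI := convex_image_of_ordConnected hI hfc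
  have hgI := convex_image_of_ordConnected hI hgc
  have hinv := hf.injOn.leftInvOn_invFunOn
  have hcont : ContinuousOn (g ∘ invFunOn f I) (f '' I) :=
    hgc.comp (continuousOn_invFunOn_image hI hfI.ordConnected hf) fun _ => invFunOn_mem
  refine convexOn_of_forall_weight_le hfI hcont hξ ?_
  rintro _ ⟨x, hx, rfl⟩ _ ⟨y, hy, rfl⟩
  have hw := pair_mem_stdSimplex (Ioo_subset_Icc_self hξ)
  have hxy : ∀ i, ![x, y] i ∈ I := Fin.forall_fin_two.2 ⟨hx, hy⟩
  have hfmem : qamW I f ξ x y ∈ I := by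
    rw [qamW_eq_weightedQam]; exact weightedQam_mem hfI hw hxy
  have hgmem : qamW I g ξ x y ∈ I := by
    rw [qamW_eq_weightedQam]; exact weightedQam_mem hgI hw hxy
  calc
    g (qamW I f ξ x y) ≤ g (qamW I g ξ x y) := hg.monotoneOn hfmem hgmem (hle x hx y hy)
    _ = ξ * g x + (1 - ξ) * g y := by
      simpa [qamW_eq_weightedQam] using apply_weightedQam hgI hw hxy
    _ = ξ * (g ∘ invFunOn f I) (f x) + (1 - ξ) * (g ∘ invFunOn f I) (f y) := by
      simp only [comp_apply, hinv hx, hinv hy]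

lemma weightedQam_le_of_qamW_le {ι : Type*} [Fintype ι] {w a : ι → ℝ} (hI : I.OrdConnected)
    (hfc : ContinuousOn f I) (hgc : ContinuousOn g I)
    (hfm : StrictMonoOrAntiOn f I) (hgm : StrictMonoOrAntiOn g I) (hξ : ξ ∈ Ioo (0 : ℝ) 1)
    (hle : ∀ a₁ ∈ I, ∀ a₂ ∈ I, qamW I f ξ a₁ a₂ ≤ qamW I g ξ a₁ a₂)
    (hw : w ∈ stdSimplex ℝ ι) (ha : ∀ i, a i ∈ I) :
    weightedQam I f w a ≤ weightedQam I g w a := by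
  wlog hf : StrictMonoOn f I generalizing f
  · have hneg : StrictMonoOn (-f) I := (hfm.resolve_left hf).neg
    simpa only [weightedQam_neg] using this hfc.neg (.inl hneg)
      (by simpa only [qamW_eq_weightedQam, weightedQam_neg] using hle) hneg
  wlog hg : StrictMonoOn g I generalizing g
  · have hneg : StrictMonoOn (-g) I := (hgm.resolve_left hg).neg
    simpa only [weightedQam_neg] using this hgc.neg (.inl hneg)
      (by simpa only [qamW_eq_weightedQam, weightedQam_neg] using hle) hneg
  exact weightedQam_le_of_convexOn (convex_image_of_ordConnected hI hgc) hf.injOn hg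
    (convexOn_comp_invFunOn_of_qamW_le hI hfc hgc hf hg hξ hle) hw ha

lemma qamW_half_le_of_qamLE (h : qamLE I f g) :
    ∀ a₁ ∈ I, ∀ a₂ ∈ I, qamW I f (1 / 2) a₁ a₂ ≤ qamW I g (1 / 2) a₁ a₂ := by
  intro a₁ ha₁ a₂ ha₂
  simp only [qamW_half_eq_qam]
  exact h 2 one_le_two _ (Fin.forall_fin_two.2 ⟨ha₁, ha₂⟩)

end Comparison

/-- `A^[f] ≤ A^[g]` is equivalent to the weighted two-variable
comparison for some weight `ξ ∈ (0,1)`, and to the weighted two-variable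
comparison for every weight `ξ ∈ (0,1)`. -/
theorem qam_le_iff_weighted_two_var
    (I : Set ℝ) (hI : I.OrdConnected) (hInontriv : ∃ x ∈ I, ∃ y ∈ I, x < y)
    (f g : ℝ → ℝ) (hfc : ContinuousOn f I) (hgc : ContinuousOn g I)
    (hfm : StrictMonoOrAntiOn f I) (hgm : StrictMonoOrAntiOn g I) :
    (qamLE I f g ↔
      ∃ ξ ∈ Ioo (0:ℝ) 1, ∀ a₁ ∈ I, ∀ a₂ ∈ I, qamW I f ξ a₁ a₂ ≤ qamW I g ξ a₁ a₂) ∧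
    (qamLE I f g ↔
      ∀ ξ ∈ Ioo (0:ℝ) 1, ∀ a₁ ∈ I, ∀ a₂ ∈ I, qamW I f ξ a₁ a₂ ≤ qamW I g ξ a₁ a₂) := by
  have hhalf : (1 / 2 : ℝ) ∈ Ioo (0 : ℝ) 1 := by norm_num
  have qamLE_of_weight : ∀ ξ ∈ Ioo (0 : ℝ) 1,
      (∀ a₁ ∈ I, ∀ a₂ ∈ I, qamW I f ξ a₁ a₂ ≤ qamW I g ξ a₁ a₂) → qamLE I f g := by
    intro ξ hξ hle n hn a ha
    simpa only [qam_eq_weightedQam] using weightedQam_le_of_qamW_le hI hfc hgc hfm hgm hξ hle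
      (const_inv_mem_stdSimplex (Nat.one_le_iff_ne_zero.1 hn)) ha
  have every_weight_of_qamLE : qamLE I f g →
      ∀ ξ ∈ Ioo (0 : ℝ) 1, ∀ a₁ ∈ I, ∀ a₂ ∈ I, qamW I f ξ a₁ a₂ ≤ qamW I g ξ a₁ a₂ := by
    intro h ξ hξ a₁ ha₁ a₂ ha₂
    simpa only [qamW_eq_weightedQam] using weightedQam_le_of_qamW_le hI hfc hgc hfm hgm hhalf
      (qamW_half_le_of_qamLE h) (pair_mem_stdSimplex (Ioo_subset_Icc_self hξ))
      (Fin.forall_fin_two.2 ⟨ha₁, ha₂⟩)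
  exact ⟨⟨fun h => ⟨1 / 2, hhalf, qamW_half_le_of_qamLE h⟩,
      fun ⟨ξ, hξ, hle⟩ => qamLE_of_weight ξ hξ hle⟩,
    every_weight_of_qamLE, fun h => qamLE_of_weight (1 / 2) hhalf (h _ hhalf)⟩
end
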